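/- Let ε > 0, let N ≥ 2 and Q0 ≥ 2 be real numbers with Q0 > N^{1/4}, let q1 ∈ ℤ[i] with Q0/√2 < N(q1) ≤ Q0, and let r1 ∈ ℤ[i] be coprime to q1. Set S(q1,r1,j) := ∑_{q∈ℤ[i]} exp(−π N(q)/(2Q0)) · e(Re(j r1 q² / q1²)). Then ∑_{j∈ℤ[i]\{0}} exp(−2π N(j) Q0²/N) · |S(q1,r1,j)|² ≤ C(ε) · (Q0 N)^ε · (Q0² + N/Q0), where C(ε) depends only on ε. -/

import Mathlib

noncomputable section

/-- `e(t) = exp(2πit)`. -/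
def e (t : ℝ) : ℂ := Complex.exp (2 * Real.pi * Complex.I * t)

/-- The norm of a Gaussian integer, as a real number. -/
def gN (z : GaussianInt) : ℝ := (z.re : ℝ) ^ 2 + (z.im : ℝ) ^ 2

/-- The smoothed quadratic Gauss-type sum
`S(q₁,r₁,j) = ∑_{q ∈ ℤ[i]} exp(-π N(q)/(2Q₀)) e(Re(j r₁ q²/q₁²))`. -/
def Ssum (Q0 : ℝ) (q1 r1 j : GaussianInt) : ℂ :=
  ∑' q : GaussianInt,
    ((Real.exp (-Real.pi * gN q / (2 * Q0)) : ℝ) : ℂ)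
      * e (((j : ℂ) * (r1 : ℂ) * (q : ℂ) ^ 2 / (q1 : ℂ) ^ 2).re)

/-!
Weyl differencing followed by Poisson summation over `ℤ[i]` bounds `|S(q₁, r₁, j)|²` by
`Q₀ ∑_h exp(-π N(h)/(4Q₀)) θ(2jh)`, where `θ(m)` is the Gaussian mass, at scale `Q₀/π`, of the
residue class of `r₁ m` modulo `q₁²`. The term `h = 0` is handled by `θ(0) ≪ 1`. For `h ≠ 0`, the
AM-GM inequality merges the weights in `j` and `h` into the single weight `exp(-2c|2jh|)` with
`c² = Q₀/N`; grouping by `m = 2jh` then costs a divisor function, absorbed into `(Q₀N)^ε`. Finally,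
since `r₁` is invertible modulo `q₁²`, a unimodular change of variables in `(m, k)` turns
`∑_m exp(-c|m|) θ(m)`, with `θ` a sum over `l = r₁ m + q₁² k`, into a sum over `l` of Gaussian
weights times sums over translates of the lattice `q₁² ℤ[i]`, both of which are elementary.
-/

open scoped ENNReal Real ComplexConjugate

lemma rpow_mul_exp_neg_le {s c y : ℝ} (hs : 0 < s) (hc : 0 < c) (hy : 0 ≤ y) :
    y ^ s * Real.exp (-(c * y)) ≤ (s / c) ^ s := by
  have hlin : y ≤ s / c * Real.exp (c * y / s) := by
    have h := Real.add_one_le_exp (c * y / s)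
    calc y = s / c * (c * y / s) := by field_simp
      _ ≤ s / c * Real.exp (c * y / s) := by gcongr; linarith
  have hpow : y ^ s ≤ (s / c) ^ s * Real.exp (c * y) := by
    calc y ^ s ≤ (s / c * Real.exp (c * y / s)) ^ s := by gcongr
      _ = (s / c) ^ s * Real.exp (c * y) := by
        rw [Real.mul_rpow (by positivity) (by positivity), ← Real.exp_mul,
          div_mul_cancel₀ _ hs.ne']
  rwa [Real.exp_neg, ← div_eq_mul_inv, div_le_iff₀ (Real.exp_pos _)]

lemma summable_and_tsum_le_of_tsum_ofReal_le {ι : Type*} {f : ι → ℝ} {B : ℝ}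
    (hf : ∀ i, 0 ≤ f i) (hB : 0 ≤ B) (h : ∑' i, ENNReal.ofReal (f i) ≤ ENNReal.ofReal B) :
    Summable f ∧ ∑' i, f i ≤ B := by
  have hs : Summable f := by
    refine (ENNReal.summable_toReal (ne_top_of_le_ne_top ENNReal.ofReal_ne_top h)).congr fun i => ?_
    exact ENNReal.toReal_ofReal (hf i)
  rw [← ENNReal.ofReal_tsum_of_nonneg hf hs, ENNReal.ofReal_le_ofReal_iff hB] at h
  exact ⟨hs, h⟩

section GaussianNorm

variable (z w : GaussianInt)

lemma gN_eq_norm_sq : gN z = ‖(z : ℂ)‖ ^ 2 := by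
  rw [Complex.sq_norm, Complex.normSq_apply, ← GaussianInt.intCast_re, ← GaussianInt.intCast_im,
    gN, sq, sq]

lemma gN_nonneg : 0 ≤ gN z := by
  rw [gN_eq_norm_sq]
  positivity

lemma gN_mul : gN (z * w) = gN z * gN w := by
  rw [gN_eq_norm_sq, gN_eq_norm_sq, gN_eq_norm_sq, map_mul, norm_mul, mul_pow]

lemma gN_eq_natAbs_norm : gN z = (z.norm.natAbs : ℝ) := by
  rw [GaussianInt.natCast_natAbs_norm, GaussianInt.intCast_real_norm, gN_eq_norm_sq,
    Complex.sq_norm]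

variable {z} in
lemma one_le_gN (hz : z ≠ 0) : 1 ≤ gN z := by
  rw [gN_eq_natAbs_norm]
  exact_mod_cast Int.natAbs_pos.2 (GaussianInt.norm_eq_zero.not.2 hz)

end GaussianNorm

section LatticeSums

variable {c : ℝ}

lemma tsum_nat_exp_neg_mul_le (hc : 0 < c) :
    ∑' n : ℕ, ENNReal.ofReal (Real.exp (-(c * n))) ≤ ENNReal.ofReal (1 + 1 / c) := by
  have hexp : Real.exp (-c) ≤ 1 / (1 + c) := by
    rw [Real.exp_neg, inv_eq_one_div]
    gcongr
    linarith [Real.add_one_le_exp c]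
  have hlt : Real.exp (-c) < 1 := Real.exp_lt_one_iff.2 (by linarith)
  have hpow (n : ℕ) : Real.exp (-(c * n)) = Real.exp (-c) ^ n := by
    rw [← Real.exp_nat_mul]
    ring_nf
  simp_rw [hpow]
  rw [← ENNReal.ofReal_tsum_of_nonneg (fun n => by positivity)
    (summable_geometric_of_lt_one (Real.exp_nonneg _) hlt),
    tsum_geometric_of_lt_one (Real.exp_nonneg _) hlt]
  gcongr
  have h : c / (1 + c) ≤ 1 - Real.exp (-c) := by
    have : c / (1 + c) = 1 - 1 / (1 + c) := by field_simp; ring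
    linarith
  calc (1 - Real.exp (-c))⁻¹ ≤ (c / (1 + c))⁻¹ := by gcongr
    _ = 1 + 1 / c := by field_simp; ring

lemma tsum_int_exp_neg_mul_abs_add_le (hc : 0 < c) (x : ℝ) :
    ∑' n : ℤ, ENNReal.ofReal (Real.exp (-(c * |n + x|))) ≤ ENNReal.ofReal (2 * (1 + 1 / c)) := by
  wlog hx : 0 ≤ x ∧ x ≤ 1 generalizing x
  · have h := this (Int.fract x) ⟨Int.fract_nonneg x, (Int.fract_lt_one x).le⟩
    rw [← (Equiv.addRight ⌊x⌋).tsum_eq] at h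
    simpa [add_assoc] using h
  rw [tsum_of_nat_of_neg_add_one ENNReal.summable ENNReal.summable, two_mul,
    ENNReal.ofReal_add (by positivity) (by positivity)]
  refine add_le_add ?_ ?_ <;>
    refine (ENNReal.tsum_le_tsum fun n => ?_).trans (tsum_nat_exp_neg_mul_le hc) <;>
    gcongr <;> push_cast
  · linarith [le_abs_self ((n : ℝ) + x)]
  · linarith [neg_le_abs (-((n : ℝ) + 1) + x)]

/-- The identification of `ℤ × ℤ` with `ℤ[i]` by real and imaginary parts, used to factor sums over
`ℤ[i]` into sums over `ℤ`. -/
def intProdEquivGaussianInt : ℤ × ℤ ≃ GaussianInt where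
  toFun p := ⟨p.1, p.2⟩
  invFun z := (z.re, z.im)
  left_inv _ := rfl
  right_inv _ := rfl

lemma tsum_gaussianInt_mul (f g : ℤ → ℝ≥0∞) :
    ∑' m : GaussianInt, f m.re * g m.im = (∑' a, f a) * ∑' b, g b := by
  rw [← intProdEquivGaussianInt.tsum_eq, ← ENNReal.tsum_mul_right]
  simp_rw [← ENNReal.tsum_mul_left]
  exact ENNReal.tsum_prod (f := fun a b => f a * g b)

lemma tsum_gaussianInt_exp_neg_mul_norm_add_le (hc : 0 < c) (z : ℂ) :
    ∑' m : GaussianInt, ENNReal.ofReal (Real.exp (-(c * ‖(m : ℂ) + z‖))) ≤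
      ENNReal.ofReal (24 * (1 + 1 / c ^ 2)) := by
  have hfactor (m : GaussianInt) : Real.exp (-(c * ‖(m : ℂ) + z‖)) ≤
      Real.exp (-(c / 2 * |m.re + z.re|)) * Real.exp (-(c / 2 * |m.im + z.im|)) := by
    have hre := Complex.abs_re_le_norm ((m : ℂ) + z)
    have him := Complex.abs_im_le_norm ((m : ℂ) + z)
    rw [Complex.add_re, ← GaussianInt.intCast_re] at hre
    rw [Complex.add_im, ← GaussianInt.intCast_im] at him
    rw [← Real.exp_add]
    gcongr
    nlinarith
  have hc' : 0 < c / 2 := by positivity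
  calc ∑' m : GaussianInt, ENNReal.ofReal (Real.exp (-(c * ‖(m : ℂ) + z‖)))
      ≤ ∑' m : GaussianInt, ENNReal.ofReal (Real.exp (-(c / 2 * |m.re + z.re|))) *
          ENNReal.ofReal (Real.exp (-(c / 2 * |m.im + z.im|))) := by
        refine ENNReal.tsum_le_tsum fun m => ?_
        rw [← ENNReal.ofReal_mul (by positivity)]
        exact ENNReal.ofReal_le_ofReal (hfactor m)
    _ = (∑' a : ℤ, ENNReal.ofReal (Real.exp (-(c / 2 * |a + z.re|)))) *
          ∑' b : ℤ, ENNReal.ofReal (Real.exp (-(c / 2 * |b + z.im|))) :=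
        tsum_gaussianInt_mul (fun a => ENNReal.ofReal (Real.exp (-(c / 2 * |a + z.re|))))
          fun b => ENNReal.ofReal (Real.exp (-(c / 2 * |b + z.im|)))
    _ ≤ ENNReal.ofReal (2 * (1 + 1 / (c / 2))) * ENNReal.ofReal (2 * (1 + 1 / (c / 2))) := by
        gcongr <;> exact tsum_int_exp_neg_mul_abs_add_le hc' _
    _ ≤ ENNReal.ofReal (24 * (1 + 1 / c ^ 2)) := by
        rw [← ENNReal.ofReal_mul (by positivity)]
        refine ENNReal.ofReal_le_ofReal ?_
        rw [one_div_div, ← one_div_pow]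
        have : 2 / c = 2 * (1 / c) := by ring
        nlinarith [sq_nonneg (1 / c - 1)]

lemma tsum_gaussianInt_exp_neg_mul_norm_add_sq_le (hc : 0 < c) (z : ℂ) :
    ∑' m : GaussianInt, ENNReal.ofReal (Real.exp (-(c * ‖(m : ℂ) + z‖ ^ 2))) ≤
      ENNReal.ofReal (48 * (1 + 1 / c)) := by
  have hsqrt : √c ^ 2 = c := Real.sq_sqrt hc.le
  have htwo : Real.exp (1 / 4) ≤ 2 := by
    rw [← Real.le_log_iff_exp_le two_pos]
    linarith [Real.log_two_gt_d9]
  -- Completing the square: `y - 1/4 ≤ y²` with `y = √c ‖m + z‖`.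
  have hterm (m : GaussianInt) :
      Real.exp (-(c * ‖(m : ℂ) + z‖ ^ 2)) ≤ 2 * Real.exp (-(√c * ‖(m : ℂ) + z‖)) := by
    calc Real.exp (-(c * ‖(m : ℂ) + z‖ ^ 2)) ≤ Real.exp (1 / 4 + -(√c * ‖(m : ℂ) + z‖)) := by
          gcongr
          nlinarith [sq_nonneg (√c * ‖(m : ℂ) + z‖ - 1 / 2)]
      _ ≤ 2 * Real.exp (-(√c * ‖(m : ℂ) + z‖)) := by
          rw [Real.exp_add]
          gcongr
  calc ∑' m : GaussianInt, ENNReal.ofReal (Real.exp (-(c * ‖(m : ℂ) + z‖ ^ 2)))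
      ≤ ENNReal.ofReal 2 * ∑' m : GaussianInt,
          ENNReal.ofReal (Real.exp (-(√c * ‖(m : ℂ) + z‖))) := by
        rw [← ENNReal.tsum_mul_left]
        refine ENNReal.tsum_le_tsum fun m => ?_
        rw [← ENNReal.ofReal_mul zero_le_two]
        exact ENNReal.ofReal_le_ofReal (hterm m)
    _ ≤ ENNReal.ofReal 2 * ENNReal.ofReal (24 * (1 + 1 / √c ^ 2)) := by
        gcongr
        exact tsum_gaussianInt_exp_neg_mul_norm_add_le (Real.sqrt_pos.2 hc) z
    _ = ENNReal.ofReal (48 * (1 + 1 / c)) := by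
        rw [← ENNReal.ofReal_mul zero_le_two, hsqrt]
        ring_nf

lemma summable_exp_neg_mul_norm_add_sq (hc : 0 < c) (z : ℂ) :
    Summable fun m : GaussianInt => Real.exp (-(c * ‖(m : ℂ) + z‖ ^ 2)) :=
  (summable_and_tsum_le_of_tsum_ofReal_le (fun _ => Real.exp_nonneg _) (by positivity)
    (tsum_gaussianInt_exp_neg_mul_norm_add_sq_le hc z)).1

lemma tsum_gaussianInt_exp_neg_mul_gN_le (hc : 0 < c) :
    ∑' m : GaussianInt, ENNReal.ofReal (Real.exp (-(c * gN m))) ≤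
      ENNReal.ofReal (48 * (1 + 1 / c)) := by
  simpa only [gN_eq_norm_sq, add_zero] using tsum_gaussianInt_exp_neg_mul_norm_add_sq_le hc 0

lemma summable_exp_neg_mul_gN (hc : 0 < c) :
    Summable fun m : GaussianInt => Real.exp (-(c * gN m)) := by
  simpa only [gN_eq_norm_sq, add_zero] using summable_exp_neg_mul_norm_add_sq hc 0

lemma finite_setOf_gN_le (X : ℝ) : {z : GaussianInt | gN z ≤ X}.Finite := by
  have hfin := ENNReal.finite_const_le_of_tsum_ne_top
    (summable_exp_neg_mul_gN one_pos).tsum_ofReal_ne_top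
    (ENNReal.ofReal_pos.2 (Real.exp_pos (-X))).ne'
  refine hfin.subset fun z (hz : gN z ≤ X) => ?_
  simpa [ENNReal.ofReal_le_ofReal_iff, Real.exp_nonneg] using hz

end LatticeSums

section Poisson

lemma e_add (s t : ℝ) : e (s + t) = e s * e t := by
  rw [e, e, e, ← Complex.exp_add]
  push_cast
  ring_nf

lemma conj_e (t : ℝ) : conj (e t) = e (-t) := by
  rw [e, e, ← Complex.exp_conj]
  simp [Complex.conj_ofNat]

lemma norm_e (t : ℝ) : ‖e t‖ = 1 := by
  simp [e, Complex.norm_exp]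

variable {a : ℝ}

lemma enorm_exp_neg_mul_add_I_mul_sq (ha : a ≠ 0) (x y α : ℝ) :
    ‖Complex.exp (-π / a * (y + Complex.I * (-(a * x) + Complex.I * α)) ^ 2)‖ₑ =
      ENNReal.ofReal (Real.exp (π * a * x ^ 2)) *
        ENNReal.ofReal (Real.exp (-(π / a * (y - α) ^ 2))) := by
  have hac : (a : ℂ) ≠ 0 := by exact_mod_cast ha
  have hsplit : -π / a * (y + Complex.I * (-(a * x) + Complex.I * α)) ^ 2 =
      ((π * a * x ^ 2 + -(π / a * (y - α) ^ 2) : ℝ) : ℂ) +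
        ((2 * π * x * (y - α) : ℝ) : ℂ) * Complex.I := by
    have hI := Complex.I_sq
    have hshift : (y : ℂ) + Complex.I * (-(a * x) + Complex.I * α) =
        (y - α) - Complex.I * (a * x) := by linear_combination (α : ℂ) * hI
    rw [hshift]
    push_cast
    field_simp
    linear_combination (-(a * x : ℂ) ^ 2) * hI
  rw [← ofReal_norm, Complex.norm_exp, hsplit, Complex.add_re, Complex.re_ofReal_mul,
    Complex.ofReal_re, Complex.I_re, mul_zero, add_zero, Real.exp_add,
    ENNReal.ofReal_mul (by positivity)]

lemma enorm_tsum_int_gaussian_mul_e_le (ha : 0 < a) (x α : ℝ) :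
    ‖∑' n : ℤ, ((Real.exp (-(π * a * (n + x) ^ 2)) : ℝ) : ℂ) * e (α * n)‖ₑ ≤
      ENNReal.ofReal (1 / √a) * ∑' n : ℤ, ENNReal.ofReal (Real.exp (-(π / a * (n - α) ^ 2))) := by
  have hleft (n : ℤ) : ((Real.exp (-(π * a * (n + x) ^ 2)) : ℝ) : ℂ) * e (α * n) =
      ((Real.exp (-(π * a * x ^ 2)) : ℝ) : ℂ) *
        Complex.exp (-π * a * n ^ 2 + 2 * π * (-(a * x) + Complex.I * α) * n) := by
    rw [e, Complex.ofReal_exp, Complex.ofReal_exp, ← Complex.exp_add, ← Complex.exp_add]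
    push_cast
    ring_nf
  have hconst : ‖(1 : ℂ) / (a : ℂ) ^ (1 / 2 : ℂ)‖ₑ = ENNReal.ofReal (1 / √a) := by
    rw [← ofReal_norm, norm_div, norm_one, Complex.norm_cpow_eq_rpow_re_of_pos ha,
      Real.sqrt_eq_rpow]
    norm_num
  have hcancel : ENNReal.ofReal (Real.exp (-(π * a * x ^ 2))) *
      ENNReal.ofReal (Real.exp (π * a * x ^ 2)) = 1 := by
    rw [← ENNReal.ofReal_mul (by positivity), ← Real.exp_add]
    simp
  calc _ = ENNReal.ofReal (Real.exp (-(π * a * x ^ 2))) * (ENNReal.ofReal (1 / √a) *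
        ‖∑' n : ℤ, Complex.exp (-π / a * (n + Complex.I * (-(a * x) + Complex.I * α)) ^ 2)‖ₑ) := by
        simp_rw [hleft]
        rw [tsum_mul_left, Complex.tsum_exp_neg_quadratic (by simpa using ha), enorm_mul,
          enorm_mul, hconst, ← ofReal_norm (Complex.ofReal _), Complex.norm_real, Real.norm_eq_abs,
          Real.abs_exp]
    _ ≤ ENNReal.ofReal (Real.exp (-(π * a * x ^ 2))) * (ENNReal.ofReal (1 / √a) *
        (ENNReal.ofReal (Real.exp (π * a * x ^ 2)) *
          ∑' n : ℤ, ENNReal.ofReal (Real.exp (-(π / a * (n - α) ^ 2))))) := by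
        gcongr
        rw [← ENNReal.tsum_mul_left]
        exact enorm_tsum_le_tsum_enorm.trans
          (tsum_congr fun n => mod_cast enorm_exp_neg_mul_add_I_mul_sq ha.ne' x n α).le
    _ = _ := by
        rw [mul_left_comm, ← mul_assoc (ENNReal.ofReal (Real.exp _)), hcancel, one_mul]

lemma norm_toComplex_add_sq (m : GaussianInt) (z : ℂ) :
    ‖(m : ℂ) + z‖ ^ 2 = (m.re + z.re) ^ 2 + (m.im + z.im) ^ 2 := by
  rw [Complex.sq_norm, Complex.normSq_apply, Complex.add_re, Complex.add_im,
    ← GaussianInt.intCast_re, ← GaussianInt.intCast_im, sq, sq]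

lemma tsum_gaussianInt_eq_tsum_mul_tsum {f : GaussianInt → ℂ} (hf : Summable f) {g h : ℤ → ℂ}
    (hfgh : ∀ a b, f ⟨a, b⟩ = g a * h b) : ∑' m, f m = (∑' a, g a) * ∑' b, h b := by
  rw [← intProdEquivGaussianInt.tsum_eq]
  refine (intProdEquivGaussianInt.summable_iff.2 hf).tsum_prod.trans ?_
  rw [← tsum_mul_right]
  refine tsum_congr fun a => ?_
  rw [← tsum_mul_left]
  exact tsum_congr (hfgh a)

lemma enorm_tsum_gaussianInt_gaussian_mul_e_le (ha : 0 < a) (z γ : ℂ) :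
    ‖∑' q : GaussianInt, ((Real.exp (-(π * a * ‖(q : ℂ) + z‖ ^ 2)) : ℝ) : ℂ) * e (γ * q).re‖ₑ ≤
      ENNReal.ofReal (1 / a) *
        ∑' k : GaussianInt, ENNReal.ofReal (Real.exp (-(π / a * ‖(k : ℂ) + γ‖ ^ 2))) := by
  have hsplit (m n : ℤ) :
      ((Real.exp (-(π * a * ‖((⟨m, n⟩ : GaussianInt) : ℂ) + z‖ ^ 2)) : ℝ) : ℂ) *
          e (γ * ((⟨m, n⟩ : GaussianInt) : ℂ)).re =
        (((Real.exp (-(π * a * (m + z.re) ^ 2)) : ℝ) : ℂ) * e (γ.re * m)) *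
          (((Real.exp (-(π * a * (n + z.im) ^ 2)) : ℝ) : ℂ) * e (-γ.im * n)) := by
    have hphase : (γ * ((⟨m, n⟩ : GaussianInt) : ℂ)).re = γ.re * m + -γ.im * n := by
      simp [Complex.mul_re, sub_eq_add_neg]
    rw [hphase, e_add, norm_toComplex_add_sq, mul_add, neg_add, Real.exp_add, Complex.ofReal_mul]
    ring
  have hsummable : Summable fun q : GaussianInt =>
      ((Real.exp (-(π * a * ‖(q : ℂ) + z‖ ^ 2)) : ℝ) : ℂ) * e (γ * q).re := by
    have hweight := summable_exp_neg_mul_norm_add_sq (mul_pos Real.pi_pos ha) z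
    refine .of_norm (hweight.congr fun q => ?_)
    rw [norm_mul, norm_e, mul_one, Complex.norm_real, Real.norm_eq_abs, Real.abs_exp]
  rw [tsum_gaussianInt_eq_tsum_mul_tsum hsummable hsplit, enorm_mul]
  refine (mul_le_mul' (enorm_tsum_int_gaussian_mul_e_le ha _ _)
    (enorm_tsum_int_gaussian_mul_e_le ha _ _)).trans_eq ?_
  rw [mul_mul_mul_comm, ← ENNReal.ofReal_mul (by positivity), one_div_mul_one_div,
    Real.mul_self_sqrt ha.le, ← (Equiv.neg ℤ).tsum_eq fun n : ℤ =>
      ENNReal.ofReal (Real.exp (-(π / a * (n - γ.re) ^ 2))), ← tsum_gaussianInt_mul]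
  congr 1
  refine tsum_congr fun k => ?_
  rw [← ENNReal.ofReal_mul (by positivity), ← Real.exp_add, norm_toComplex_add_sq, Equiv.neg_apply]
  push_cast
  ring_nf

end Poisson

section WeylDifferencing

variable {G 𝕜 : Type*} [AddGroup G] [RCLike 𝕜] {F : G → 𝕜}

lemma hasSum_mul_conj_shear (hF : Summable fun q => ‖F q‖) :
    HasSum (fun p : G × G => F (p.2 + p.1) * conj (F p.2))
      ((∑' q, F q) * conj (∑' q, F q)) := by
  have hconj : Summable fun q => ‖conj (F q)‖ := by simpa using hF
  have hprod := (summable_mul_of_summable_norm hF hconj).hasSum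
  rw [← tsum_mul_tsum_of_summable_norm hF hconj, ← RCLike.conj_tsum] at hprod
  rw [← ((Equiv.prodShear (Equiv.refl G) Equiv.addLeft).trans (Equiv.prodComm G G)).hasSum_iff,
    ← (Equiv.prodComm G G).hasSum_iff] at hprod
  exact hprod

lemma enorm_tsum_sq_le_tsum_enorm_tsum_mul_conj (hF : Summable fun q => ‖F q‖) :
    ‖∑' q, F q‖ₑ ^ 2 ≤ ∑' h, ‖∑' q, F (q + h) * conj (F q)‖ₑ := by
  calc ‖∑' q, F q‖ₑ ^ 2 = ‖(∑' q, F q) * conj (∑' q, F q)‖ₑ := by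
        rw [enorm_mul, sq, ← ofReal_norm (conj _), RCLike.norm_conj, ofReal_norm]
    _ = ‖∑' h, ∑' q, F (q + h) * conj (F q)‖ₑ := by
        rw [← (hasSum_mul_conj_shear hF).tsum_eq, (hasSum_mul_conj_shear hF).summable.tsum_prod]
    _ ≤ ∑' h, ‖∑' q, F (q + h) * conj (F q)‖ₑ := enorm_tsum_le_tsum_enorm

end WeylDifferencing

section SmoothQuadraticSum

/-- The term of index `q` in the Gaussian-smoothed quadratic exponential sum with frequency `β`;
the sum `Ssum Q q₁ r₁ j` has frequency `β = j r₁ / q₁²`. -/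
def smoothQuadTerm (Q : ℝ) (β : ℂ) (q : GaussianInt) : ℂ :=
  ((Real.exp (-(π * gN q / (2 * Q))) : ℝ) : ℂ) * e (β * (q : ℂ) ^ 2).re

variable {Q : ℝ}

lemma Ssum_eq_tsum_smoothQuadTerm (q₁ r₁ j : GaussianInt) :
    Ssum Q q₁ r₁ j = ∑' q, smoothQuadTerm Q ((j : ℂ) * r₁ / (q₁ : ℂ) ^ 2) q :=
  tsum_congr fun q => by rw [smoothQuadTerm, mul_div_right_comm (_ * _), neg_mul, neg_div]

lemma summable_norm_smoothQuadTerm (hQ : 0 < Q) (β : ℂ) :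
    Summable fun q => ‖smoothQuadTerm Q β q‖ := by
  refine (summable_exp_neg_mul_gN (show 0 < π / (2 * Q) by positivity)).congr fun q => ?_
  rw [smoothQuadTerm, norm_mul, norm_e, mul_one, Complex.norm_real, Real.norm_eq_abs, Real.abs_exp,
    div_mul_eq_mul_div]

lemma smoothQuadTerm_add_mul_conj (β : ℂ) (h q : GaussianInt) :
    smoothQuadTerm Q β (q + h) * conj (smoothQuadTerm Q β q) =
      ((Real.exp (-(π * gN h / (4 * Q))) : ℝ) : ℂ) * e (β * (h : ℂ) ^ 2).re *
        (((Real.exp (-(π * (1 / Q) * ‖(q : ℂ) + h / 2‖ ^ 2)) : ℝ) : ℂ) *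
          e (2 * β * h * q).re) := by
  have hparallelogram : gN (q + h) + gN q = 2 * ‖(q : ℂ) + h / 2‖ ^ 2 + gN h / 2 := by
    have h' := parallelogram_law_with_norm ℝ ((q : ℂ) + h / 2) (h / 2)
    rw [add_assoc, add_halves, add_sub_cancel_right, norm_div, Complex.norm_ofNat] at h'
    rw [gN_eq_norm_sq, gN_eq_norm_sq, gN_eq_norm_sq, map_add]
    linear_combination h'
  have hphase : (β * ((q + h : GaussianInt) : ℂ) ^ 2).re + -(β * (q : ℂ) ^ 2).re =
      (β * (h : ℂ) ^ 2).re + (2 * β * h * q).re := by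
    rw [← Complex.neg_re, ← Complex.add_re, ← Complex.add_re, map_add]
    ring_nf
  have hweight : Real.exp (-(π * gN (q + h) / (2 * Q))) * Real.exp (-(π * gN q / (2 * Q))) =
      Real.exp (-(π * gN h / (4 * Q))) *
        Real.exp (-(π * (1 / Q) * ‖(q : ℂ) + h / 2‖ ^ 2)) := by
    rw [← Real.exp_add, ← Real.exp_add]
    congr 1
    linear_combination -(π / (2 * Q)) * hparallelogram
  have hweight' := congrArg Complex.ofReal hweight
  have hphase' := congrArg e hphase
  rw [Complex.ofReal_mul, Complex.ofReal_mul] at hweight'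
  rw [e_add, e_add] at hphase'
  rw [smoothQuadTerm, smoothQuadTerm, map_mul, conj_e, Complex.conj_ofReal, mul_mul_mul_comm,
    hweight', hphase', mul_mul_mul_comm]

lemma enorm_tsum_smoothQuadTerm_sq_le (hQ : 0 < Q) (β : ℂ) :
    ‖∑' q, smoothQuadTerm Q β q‖ₑ ^ 2 ≤
      ∑' h : GaussianInt, ENNReal.ofReal (Q * Real.exp (-(π * gN h / (4 * Q)))) *
        ∑' k : GaussianInt, ENNReal.ofReal (Real.exp (-(π * Q * ‖(k : ℂ) + 2 * β * h‖ ^ 2))) := by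
  refine (enorm_tsum_sq_le_tsum_enorm_tsum_mul_conj (summable_norm_smoothQuadTerm hQ β)).trans
    (ENNReal.tsum_le_tsum fun h => ?_)
  simp_rw [smoothQuadTerm_add_mul_conj]
  rw [tsum_mul_left, enorm_mul, enorm_mul, ← ofReal_norm (e _), norm_e, ENNReal.ofReal_one, mul_one,
    ← ofReal_norm (Complex.ofReal _), Complex.norm_real, Real.norm_eq_abs, Real.abs_exp,
    mul_comm Q, ENNReal.ofReal_mul (Real.exp_nonneg _), mul_assoc (ENNReal.ofReal _)]
  gcongr
  simpa only [one_div_one_div, div_div_eq_mul_div, div_one, one_mul] using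
    enorm_tsum_gaussianInt_gaussian_mul_e_le (one_div_pos.2 hQ) _ _

end SmoothQuadraticSum

section ResidueTheta

/-- The Gaussian mass, at scale `1/t`, of the residue class of `r m` modulo `s` in `ℤ[i]`. -/
def residueTheta (t : ℝ) (r s m : GaussianInt) : ℝ≥0∞ :=
  ∑' k : GaussianInt, ENNReal.ofReal (Real.exp (-(t * gN (r * m + s * k))))

lemma enorm_Ssum_sq_le {Q : ℝ} (hQ : 0 < Q) {q₁ : GaussianInt} (hq₁ : q₁ ≠ 0) (hle : gN q₁ ≤ Q)
    (r₁ j : GaussianInt) :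
    ‖Ssum Q q₁ r₁ j‖ₑ ^ 2 ≤
      ∑' h : GaussianInt, ENNReal.ofReal (Q * Real.exp (-(π * gN h / (4 * Q)))) *
        residueTheta (π / Q) r₁ (q₁ ^ 2) (2 * j * h) := by
  rw [Ssum_eq_tsum_smoothQuadTerm]
  refine (enorm_tsum_smoothQuadTerm_sq_le hQ _).trans ?_
  gcongr with h
  refine ENNReal.tsum_le_tsum fun k => ?_
  have hq₁' : (q₁ : ℂ) ≠ 0 := GaussianInt.toComplex_eq_zero.not.2 hq₁
  have hfactor : ((r₁ * (2 * j * h) + q₁ ^ 2 * k : GaussianInt) : ℂ) =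
      (q₁ : ℂ) ^ 2 * ((k : ℂ) + 2 * ((j : ℂ) * r₁ / (q₁ : ℂ) ^ 2) * h) := by
    simp only [map_add, map_mul, map_pow, map_ofNat]
    field_simp
    ring
  have hscale : π / Q * gN q₁ ^ 2 ≤ π * Q := by
    have := gN_nonneg q₁
    calc π / Q * gN q₁ ^ 2 ≤ π / Q * Q ^ 2 := by gcongr
      _ = π * Q := by field_simp
  refine ENNReal.ofReal_le_ofReal (Real.exp_le_exp.2 (neg_le_neg ?_))
  rw [gN_eq_norm_sq, hfactor, norm_mul, mul_pow, norm_pow, ← gN_eq_norm_sq, ← mul_assoc]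
  gcongr

/-- The unimodular change of variables attached to a Bézout relation `u r + v s = 1`: if
`(m, k)` is the image of `(l, k')`, then `r m + s k = l`. -/
def bezoutEquiv {R : Type*} [CommRing R] {r s u v : R} (h : u * r + v * s = 1) :
    R × R ≃ R × R where
  toFun p := (u * p.1 + s * p.2, v * p.1 - r * p.2)
  invFun p := (r * p.1 + s * p.2, v * p.1 - u * p.2)
  left_inv p := by
    ext
    · linear_combination p.1 * h
    · linear_combination p.2 * h
  right_inv p := by
    ext
    · linear_combination p.1 * h
    · linear_combination p.2 * h

lemma tsum_mul_linearForm_eq_of_bezout {R : Type*} [CommRing R] {r s u v : R}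
    (h : u * r + v * s = 1) (f g : R → ℝ≥0∞) :
    ∑' m, ∑' k, f m * g (r * m + s * k) = ∑' l, ∑' k, g l * f (u * l + s * k) := by
  rw [← ENNReal.tsum_prod, ← ENNReal.tsum_prod, ← (bezoutEquiv h).tsum_eq]
  refine tsum_congr fun p => ?_
  have hl : r * (bezoutEquiv h p).1 + s * (bezoutEquiv h p).2 = p.1 :=
    congrArg Prod.fst ((bezoutEquiv h).left_inv p)
  rw [hl, mul_comm]
  rfl

variable {t : ℝ} {r s : GaussianInt}

lemma tsum_exp_neg_mul_norm_mul_residueTheta_le {c : ℝ} (hc : 0 < c) (ht : 0 < t)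
    (hrs : IsCoprime r s) (hs : s ≠ 0) :
    ∑' m : GaussianInt, ENNReal.ofReal (Real.exp (-(c * ‖(m : ℂ)‖))) * residueTheta t r s m ≤
      ENNReal.ofReal (48 * (1 + 1 / t)) * ENNReal.ofReal (24 * (1 + 1 / (c ^ 2 * gN s))) := by
  obtain ⟨u, v, huv⟩ := hrs
  have hs' : (s : ℂ) ≠ 0 := GaussianInt.toComplex_eq_zero.not.2 hs
  have hinner (l : GaussianInt) :
      ∑' k : GaussianInt, ENNReal.ofReal (Real.exp (-(c * ‖((u * l + s * k : GaussianInt) : ℂ)‖))) ≤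
        ENNReal.ofReal (24 * (1 + 1 / (c ^ 2 * gN s))) := by
    have hfactor (k : GaussianInt) : c * ‖((u * l + s * k : GaussianInt) : ℂ)‖ =
        c * ‖(s : ℂ)‖ * ‖(k : ℂ) + u * l / s‖ := by
      rw [mul_assoc, ← norm_mul, mul_add, mul_div_cancel₀ _ hs', add_comm, map_add, map_mul,
        map_mul]
    simp_rw [hfactor]
    rw [gN_eq_norm_sq, ← mul_pow]
    exact tsum_gaussianInt_exp_neg_mul_norm_add_le (mul_pos hc (norm_pos_iff.2 hs')) _
  simp_rw [residueTheta, ← ENNReal.tsum_mul_left]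
  rw [tsum_mul_linearForm_eq_of_bezout huv
    (fun m => ENNReal.ofReal (Real.exp (-(c * ‖(m : ℂ)‖))))
    fun l => ENNReal.ofReal (Real.exp (-(t * gN l)))]
  simp_rw [ENNReal.tsum_mul_left]
  calc _ ≤ ∑' l : GaussianInt, ENNReal.ofReal (Real.exp (-(t * gN l))) *
        ENNReal.ofReal (24 * (1 + 1 / (c ^ 2 * gN s))) := by
        gcongr with l
        exact hinner l
    _ ≤ ENNReal.ofReal (48 * (1 + 1 / t)) * ENNReal.ofReal (24 * (1 + 1 / (c ^ 2 * gN s))) := by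
        rw [ENNReal.tsum_mul_right]
        gcongr
        exact tsum_gaussianInt_exp_neg_mul_gN_le ht

lemma residueTheta_zero_le (ht : 0 < t) (r : GaussianInt) (hs : s ≠ 0) :
    residueTheta t r s 0 ≤ ENNReal.ofReal (48 * (1 + 1 / (t * gN s))) := by
  simp_rw [residueTheta, mul_zero, zero_add, gN_mul, ← mul_assoc]
  exact tsum_gaussianInt_exp_neg_mul_gN_le (mul_pos ht (one_pos.trans_le (one_le_gN hs)))

end ResidueTheta

section DivisorBound

lemma prod_add_one_le_mul_prod_pow {ι : Type*} {T S : Finset ι} {b : ℝ} {y : ι → ℝ} (hb : 1 < b)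
    (hby : ∀ i ∈ T, b ≤ y i) (hS : ∀ i ∈ T, y i < 2 → i ∈ S) (n : ι → ℕ) :
    ∏ i ∈ T, ((n i : ℝ) + 1) ≤ (1 + 1 / (b - 1)) ^ S.card * ∏ i ∈ T, y i ^ n i := by
  classical
  set K := 1 + 1 / (b - 1)
  have hb' : 0 < b - 1 := sub_pos.2 hb
  have hK : 1 ≤ K := le_add_of_nonneg_right (by positivity)
  have hfactor : ∀ i ∈ T, (n i : ℝ) + 1 ≤ (if i ∈ S then K else 1) * y i ^ n i := by
    intro i hi
    have hyi : b ≤ y i := hby i hi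
    have hbernoulli : 1 + n i * (y i - 1) ≤ y i ^ n i := one_add_mul_sub_le_pow (by linarith) _
    split_ifs with hiS
    · calc (n i : ℝ) + 1 ≤ K * (1 + n i * (b - 1)) := by
            rw [show K = 1 + 1 / (b - 1) from rfl]
            field_simp
            nlinarith [mul_nonneg (Nat.cast_nonneg (α := ℝ) (n i)) (sq_nonneg (b - 1))]
        _ ≤ K * (1 + n i * (y i - 1)) := by gcongr
        _ ≤ K * y i ^ n i := by gcongr
    · have htwo : 2 ≤ y i := not_lt.1 fun h => hiS (hS i hi h)
      rw [one_mul]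
      nlinarith [Nat.cast_nonneg (α := ℝ) (n i)]
  calc ∏ i ∈ T, ((n i : ℝ) + 1) ≤ ∏ i ∈ T, (if i ∈ S then K else 1) * y i ^ n i :=
        Finset.prod_le_prod (fun i _ => by positivity) hfactor
    _ = K ^ (T ∩ S).card * ∏ i ∈ T, y i ^ n i := by
        rw [Finset.prod_mul_distrib, Finset.prod_ite_mem, Finset.prod_const]
    _ ≤ K ^ S.card * ∏ i ∈ T, y i ^ n i := by
        have : ∀ i ∈ T, 0 ≤ y i ^ n i := fun i hi => pow_nonneg (by linarith [hby i hi]) _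
        have := Finset.prod_nonneg this
        gcongr
        exact Finset.inter_subset_right

lemma finite_units_of_finite_setOf_map_le_one {M : Type*} [Monoid M] {ν : M →* ℕ}
    (hν : {x | ν x ≤ 1}.Finite) : Finite Mˣ := by
  have := hν.to_subtype
  exact Finite.of_injective
    (fun u : Mˣ => (⟨u, (Nat.isUnit_iff.1 (u.isUnit.map ν)).le⟩ : {x | ν x ≤ 1}))
    fun u v h => Units.ext (Subtype.ext_iff.1 h)

open UniqueFactorizationMonoid

variable {R : Type*} [CommMonoidWithZero R] [UniqueFactorizationMonoid R]

lemma card_dvd_le_prod_count_add_one_mul_card_units [StrongNormalizationMonoid R] [DecidableEq R]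
    {m : R} (hm : m ≠ 0) :
    ENat.card {h // h ∣ m} ≤
      (∏ p ∈ (normalizedFactors m).toFinset, ((normalizedFactors m).count p + 1) : ℕ) *
        ENat.card Rˣ := by
  have hne {h : R} (hh : h ∣ m) : h ≠ 0 := ne_zero_of_dvd_ne_zero hm hh
  let split (h : {h // h ∣ m}) : ↥(Finset.Iic (normalizedFactors m)) × Rˣ :=
    (⟨normalizedFactors h, Finset.mem_Iic.2
      ((dvd_iff_normalizedFactors_le_normalizedFactors (hne h.2) hm).1 h.2)⟩, normUnit h.1)
  have hinj : Function.Injective split := by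
    intro h h' heq
    obtain ⟨hfactors, hunit⟩ := Prod.ext_iff.1 heq
    have hprod := congrArg Multiset.prod (Subtype.ext_iff.1 hfactors)
    simp only [split] at hprod hunit
    rw [prod_normalizedFactors_eq (hne h.2), prod_normalizedFactors_eq (hne h'.2), normalize_apply,
      normalize_apply, hunit] at hprod
    exact Subtype.ext ((normUnit h'.1).mul_left_inj.1 hprod)
  calc ENat.card {h // h ∣ m} ≤ ENat.card (↥(Finset.Iic (normalizedFactors m)) × Rˣ) :=
        ENat.card_le_card_of_injective hinj
    _ = _ := by
        rw [ENat.card_prod, ENat.card_eq_coe_fintype_card, Fintype.card_coe, Multiset.card_Iic]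

section

variable {ν : R →* ℕ}

lemma map_eq_prod_map_pow_count [StrongNormalizationMonoid R] [DecidableEq R] {m : R}
    (hm : m ≠ 0) :
    ν m = ∏ p ∈ (normalizedFactors m).toFinset, ν p ^ (normalizedFactors m).count p := by
  obtain ⟨u, hu⟩ := prod_normalizedFactors hm
  conv_lhs => rw [← hu]
  rw [map_mul, Nat.isUnit_iff.1 (u.isUnit.map ν), mul_one, Finset.prod_multiset_count, map_prod]
  simp_rw [map_pow]

lemma two_le_map_of_prime (hν : {x | ν x ≤ 1}.Finite) {p : R} (hp : Prime p) : 2 ≤ ν p := by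
  by_contra! hlt
  refine Set.infinite_range_of_injective (pow_injective_of_not_isUnit hp.not_isUnit hp.ne_zero)
    (hν.subset ?_)
  rintro _ ⟨n, rfl⟩
  simpa using pow_le_one' (Nat.lt_succ_iff.1 hlt) n

lemma exists_prod_count_add_one_le_mul_rpow [StrongNormalizationMonoid R] [DecidableEq R]
    (hν : ∀ X, {x | ν x ≤ X}.Finite) {ε : ℝ} (hε : 0 < ε) :
    ∃ K : ℝ, 0 < K ∧ ∀ m : R, m ≠ 0 →
      ∏ p ∈ (normalizedFactors m).toFinset, (((normalizedFactors m).count p : ℝ) + 1) ≤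
        K * (ν m : ℝ) ^ ε := by
  have hb : 1 < (2 : ℝ) ^ ε := Real.one_lt_rpow one_lt_two hε
  let S : Finset R := (hν ⌈(2 : ℝ) ^ ε⁻¹⌉₊).toFinset
  refine ⟨(1 + 1 / ((2 : ℝ) ^ ε - 1)) ^ S.card,
    pow_pos (by have := sub_pos.2 hb; positivity) _, fun m hm => ?_⟩
  rw [map_eq_prod_map_pow_count hm, Nat.cast_prod,
    ← Real.finsetProd_rpow _ _ fun _ _ => by positivity]
  simp_rw [Nat.cast_pow, ← Real.rpow_pow_comm (Nat.cast_nonneg _)]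
  refine prod_add_one_le_mul_prod_pow hb (fun p hp => ?_) (fun p _ hp => ?_) _
  · have := prime_of_normalized_factor p (Multiset.mem_toFinset.1 hp)
    gcongr
    exact_mod_cast two_le_map_of_prime (hν 1) this
  · rw [Set.Finite.mem_toFinset, Set.mem_ofPred_eq, ← Nat.cast_le (α := ℝ)]
    refine le_trans ?_ (Nat.le_ceil _)
    exact ((Real.lt_rpow_inv_iff_of_pos (Nat.cast_nonneg _) zero_le_two hε).2 hp).le

theorem exists_card_dvd_le_mul_rpow (hν : ∀ X, {x | ν x ≤ X}.Finite) {ε : ℝ} (hε : 0 < ε) :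
    ∃ D : ℝ, 0 < D ∧ ∀ m : R, m ≠ 0 →
      (ENat.card {h // h ∣ m} : ℝ≥0∞) ≤ ENNReal.ofReal (D * (ν m : ℝ) ^ ε) := by
  classical
  let : StrongNormalizationMonoid R :=
    UniqueFactorizationMonoid.strongNormalizationMonoid
  have := finite_units_of_finite_setOf_map_le_one (hν 1)
  obtain ⟨K, hK, hprod⟩ := exists_prod_count_add_one_le_mul_rpow hν hε
  refine ⟨K * Nat.card Rˣ, mul_pos hK (by exact_mod_cast Nat.card_pos), fun m hm => ?_⟩
  have hcard := card_dvd_le_prod_count_add_one_mul_card_units hm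
  rw [ENat.card_eq_coe_natCard Rˣ, ← Nat.cast_mul] at hcard
  refine (ENat.toENNReal_mono hcard).trans ?_
  rw [ENat.toENNReal_coe, ← ENNReal.ofReal_natCast, mul_right_comm]
  push_cast
  gcongr
  exact hprod m hm

end

lemma exists_card_dvd_le_mul_gN_rpow {ε : ℝ} (hε : 0 < ε) :
    ∃ D : ℝ, 0 < D ∧ ∀ m : GaussianInt, m ≠ 0 →
      (ENat.card {h // h ∣ m} : ℝ≥0∞) ≤ ENNReal.ofReal (D * gN m ^ ε) := by
  simp_rw [gN_eq_natAbs_norm]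
  refine exists_card_dvd_le_mul_rpow
    (ν := (Int.natAbsHom : ℤ →* ℕ).comp Zsqrtd.normMonoidHom) (fun X => ?_) hε
  refine (finite_setOf_gN_le X).subset fun z (hz : z.norm.natAbs ≤ X) => ?_
  rw [Set.mem_ofPred_eq, gN_eq_natAbs_norm]
  exact_mod_cast hz

end DivisorBound

lemma tsum_tsum_mul_le_tsum_card_dvd_mul {R : Type*} [CommMonoidWithZero R] [IsCancelMulZero R]
    {a : R} (ha : a ≠ 0) (f : R → ℝ≥0∞) :
    ∑' j : {j : R // j ≠ 0}, ∑' h : {h : R // h ≠ 0}, f (a * j * h) ≤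
      ∑' m : {m : R // m ≠ 0}, (ENat.card {h // h ∣ (m : R)} : ℝ≥0∞) * f m := by
  let group (p : {j : R // j ≠ 0} × {h : R // h ≠ 0}) :
      Σ m : {m : R // m ≠ 0}, {h // h ∣ (m : R)} :=
    ⟨⟨a * p.1 * p.2, mul_ne_zero (mul_ne_zero ha p.1.2) p.2.2⟩, p.2, dvd_mul_left _ _⟩
  have hinj : Function.Injective group := by
    rintro ⟨⟨j, hj⟩, h, hh⟩ ⟨⟨j', hj'⟩, h', hh'⟩ heq
    have hm : a * j * h = a * j' * h' := congrArg (fun p => (p.1 : R)) heq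
    obtain rfl : h = h' := congrArg (fun p => (p.2 : R)) heq
    obtain rfl : j = j' := mul_left_cancel₀ ha (mul_right_cancel₀ hh hm)
    rfl
  simp_rw [← ENNReal.tsum_const]
  rw [← ENNReal.tsum_prod, ← ENNReal.tsum_sigma' fun p : Σ m : {m : R // m ≠ 0}, _ => f p.1]
  exact ENNReal.tsum_comp_le_tsum_of_injective hinj fun p => f p.1

section MainEstimate

variable {ε N Q : ℝ}

lemma tsum_ne_zero_exp_neg_two_mul_gN_le {x : ℝ} (hε : 0 < ε) (hx : 0 < x) :
    ∑' j : {j : GaussianInt // j ≠ 0}, ENNReal.ofReal (Real.exp (-(2 * x * gN j))) ≤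
      ENNReal.ofReal ((ε / x) ^ ε * (48 * (1 + 1 / x))) := by
  have hterm (j : {j : GaussianInt // j ≠ 0}) :
      Real.exp (-(2 * x * gN j)) ≤ (ε / x) ^ ε * Real.exp (-(x * gN j)) := by
    have hj : 1 ≤ gN j ^ ε := Real.one_le_rpow (one_le_gN j.2) hε.le
    calc Real.exp (-(2 * x * gN j)) = 1 * Real.exp (-(x * gN j)) * Real.exp (-(x * gN j)) := by
          rw [one_mul, ← Real.exp_add]
          ring_nf
      _ ≤ gN j ^ ε * Real.exp (-(x * gN j)) * Real.exp (-(x * gN j)) := by gcongr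
      _ ≤ (ε / x) ^ ε * Real.exp (-(x * gN j)) := by
          gcongr
          exact rpow_mul_exp_neg_le hε hx (gN_nonneg j)
  have hconst : 0 ≤ (ε / x) ^ ε := by positivity
  calc ∑' j : {j : GaussianInt // j ≠ 0}, ENNReal.ofReal (Real.exp (-(2 * x * gN j)))
      ≤ ∑' j : {j : GaussianInt // j ≠ 0},
          ENNReal.ofReal ((ε / x) ^ ε) * ENNReal.ofReal (Real.exp (-(x * gN j))) := by
        gcongr with j
        rw [← ENNReal.ofReal_mul hconst]
        exact ENNReal.ofReal_le_ofReal (hterm j)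
    _ ≤ ENNReal.ofReal ((ε / x) ^ ε * (48 * (1 + 1 / x))) := by
        rw [ENNReal.tsum_mul_left, ENNReal.ofReal_mul hconst]
        gcongr
        exact (ENNReal.tsum_comp_le_tsum_of_injective Subtype.val_injective _).trans
          (tsum_gaussianInt_exp_neg_mul_gN_le hx)

lemma card_dvd_mul_exp_neg_two_mul_norm_le {D c : ℝ} {m : GaussianInt} (hε : 0 < ε) (hD : 0 ≤ D)
    (hc : 0 < c)
    (hm : (ENat.card {h // h ∣ m} : ℝ≥0∞) ≤ ENNReal.ofReal (D * gN m ^ ε)) :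
    (ENat.card {h // h ∣ m} : ℝ≥0∞) * ENNReal.ofReal (Real.exp (-(2 * c * ‖(m : ℂ)‖))) ≤
      ENNReal.ofReal (D * (2 * ε / c) ^ (2 * ε)) *
        ENNReal.ofReal (Real.exp (-(c * ‖(m : ℂ)‖))) := by
  refine (mul_le_mul_left hm _).trans ?_
  rw [← ENNReal.ofReal_mul' (Real.exp_nonneg _), ← ENNReal.ofReal_mul' (Real.exp_nonneg _)]
  refine ENNReal.ofReal_le_ofReal ?_
  calc D * gN m ^ ε * Real.exp (-(2 * c * ‖(m : ℂ)‖))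
      = D * (‖(m : ℂ)‖ ^ (2 * ε) * Real.exp (-(c * ‖(m : ℂ)‖))) *
          Real.exp (-(c * ‖(m : ℂ)‖)) := by
        rw [gN_eq_norm_sq, ← Real.rpow_natCast_mul (norm_nonneg _), Nat.cast_ofNat, two_mul c,
          add_mul, neg_add, Real.exp_add]
        ring
    _ ≤ D * (2 * ε / c) ^ (2 * ε) * Real.exp (-(c * ‖(m : ℂ)‖)) := by
        gcongr
        exact rpow_mul_exp_neg_le (by positivity) hc (norm_nonneg _)

lemma tsum_tsum_ne_zero_exp_mul_residueTheta_le {D c t : ℝ} {a r s : GaussianInt} (hε : 0 < ε)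
    (hD : 0 ≤ D) (hcard : ∀ m : GaussianInt, m ≠ 0 →
      (ENat.card {h // h ∣ m} : ℝ≥0∞) ≤ ENNReal.ofReal (D * gN m ^ ε))
    (hc : 0 < c) (ht : 0 < t) (ha : a ≠ 0) (hs : s ≠ 0) (hrs : IsCoprime r s) :
    ∑' j : {j : GaussianInt // j ≠ 0}, ∑' h : {h : GaussianInt // h ≠ 0},
        ENNReal.ofReal (Real.exp (-(2 * c * ‖((a * j * h : GaussianInt) : ℂ)‖))) *
          residueTheta t r s (a * j * h) ≤
      ENNReal.ofReal (D * (2 * ε / c) ^ (2 * ε)) *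
        (ENNReal.ofReal (48 * (1 + 1 / t)) * ENNReal.ofReal (24 * (1 + 1 / (c ^ 2 * gN s)))) := by
  refine (tsum_tsum_mul_le_tsum_card_dvd_mul ha fun m =>
    ENNReal.ofReal (Real.exp (-(2 * c * ‖(m : ℂ)‖))) * residueTheta t r s m).trans ?_
  simp_rw [← mul_assoc]
  refine (ENNReal.tsum_le_tsum fun m : {m : GaussianInt // m ≠ 0} => mul_le_mul_left
    (card_dvd_mul_exp_neg_two_mul_norm_le hε hD hc (hcard m m.2)) _).trans ?_
  simp_rw [mul_assoc]
  rw [ENNReal.tsum_mul_left]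
  gcongr
  exact (ENNReal.tsum_comp_le_tsum_of_injective Subtype.val_injective _).trans
    (tsum_exp_neg_mul_norm_mul_residueTheta_le hc ht hrs hs)

-- AM-GM; `π > 3` leaves room for the discriminant `16 < 18` of `6X² - 4XY + (3/4)Y²`.
lemma exp_mul_exp_le_exp_neg_norm_mul (hN : 0 < N) (hQ : 0 < Q) (j h : GaussianInt) :
    Real.exp (-(2 * (π * Q ^ 2 / N) * gN j)) * Real.exp (-(π * gN h / (4 * Q))) ≤
      Real.exp (-(2 * √(Q / N) * ‖((2 * j * h : GaussianInt) : ℂ)‖)) := by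
  have hc : √(Q / N) ^ 2 = Q / N := Real.sq_sqrt (by positivity)
  set c := √(Q / N)
  set X := Q * c * ‖(j : ℂ)‖ with hX
  set Y := ‖(h : ℂ)‖ with hY
  have hexponent : 2 * (π * Q ^ 2 / N) * gN j + π * gN h / (4 * Q) =
      π * (2 * X ^ 2 + Y ^ 2 / 4) / Q := by
    rw [gN_eq_norm_sq, gN_eq_norm_sq, hX, mul_pow, mul_pow, hc, ← hY]
    field_simp
  have htarget : 2 * c * ‖((2 * j * h : GaussianInt) : ℂ)‖ = 4 * X * Y / Q := by
    rw [map_mul, map_mul, norm_mul, norm_mul, map_ofNat, Complex.norm_ofNat, hX, ← hY]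
    field_simp
    ring
  have hquadratic : 4 * X * Y ≤ π * (2 * X ^ 2 + Y ^ 2 / 4) := by
    have h₃ : 3 * (2 * X ^ 2 + Y ^ 2 / 4) ≤ π * (2 * X ^ 2 + Y ^ 2 / 4) := by
      gcongr
      exact Real.pi_gt_three.le
    nlinarith [sq_nonneg (X - Y / 3), sq_nonneg Y]
  rw [← Real.exp_add, ← neg_add, hexponent, htarget]
  gcongr

lemma tsum_eq_add_tsum_ne {α : Type*} (f : α → ℝ≥0∞) (a : α) :
    ∑' x, f x = f a + ∑' x : {x // x ≠ a}, f x := by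
  rw [← ENNReal.summable.tsum_add_tsum_compl (s := {a}) ENNReal.summable, tsum_singleton a f]
  rfl

variable {q₁ : GaussianInt}

lemma ne_zero_of_div_sqrt_two_lt_gN (hQ : 0 ≤ Q) (hq₁ : Q / √2 < gN q₁) : q₁ ≠ 0 := by
  rintro rfl
  have : 0 < gN 0 := (by positivity : 0 ≤ Q / √2).trans_lt hq₁
  simp [gN] at this

lemma exp_neg_mul_enorm_Ssum_sq_le (hN : 0 < N) (hQ : 0 < Q) (hq₁ : q₁ ≠ 0) (hle : gN q₁ ≤ Q)
    (r₁ j : GaussianInt) :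
    ENNReal.ofReal (Real.exp (-(2 * (π * Q ^ 2 / N) * gN j))) * ‖Ssum Q q₁ r₁ j‖ₑ ^ 2 ≤
      ENNReal.ofReal Q * residueTheta (π / Q) r₁ (q₁ ^ 2) 0 *
          ENNReal.ofReal (Real.exp (-(2 * (π * Q ^ 2 / N) * gN j))) +
        ENNReal.ofReal Q * ∑' h : {h : GaussianInt // h ≠ 0},
          ENNReal.ofReal (Real.exp (-(2 * √(Q / N) * ‖((2 * j * h : GaussianInt) : ℂ)‖))) *
            residueTheta (π / Q) r₁ (q₁ ^ 2) (2 * j * h) := by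
  set w := Real.exp (-(2 * (π * Q ^ 2 / N) * gN j))
  have hzero : Real.exp (-(π * gN 0 / (4 * Q))) = 1 := by simp [gN]
  have hsplit := enorm_Ssum_sq_le hQ hq₁ hle r₁ j
  rw [tsum_eq_add_tsum_ne _ 0, hzero, mul_one, mul_zero] at hsplit
  refine (mul_le_mul_right hsplit _).trans ?_
  rw [mul_add, mul_comm (ENNReal.ofReal w), ← ENNReal.tsum_mul_left, ← ENNReal.tsum_mul_left]
  refine add_le_add le_rfl (ENNReal.tsum_le_tsum fun h => ?_)
  rw [← mul_assoc, ← mul_assoc, ENNReal.ofReal_mul hQ.le, mul_left_comm,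
    ← ENNReal.ofReal_mul (Real.exp_nonneg _)]
  gcongr
  exact exp_mul_exp_le_exp_neg_norm_mul hN hQ j h

lemma tsum_exp_neg_mul_enorm_Ssum_sq_le (hN : 0 < N) (hQ : 0 < Q) (hq₁ : q₁ ≠ 0)
    (hle : gN q₁ ≤ Q) (r₁ : GaussianInt) :
    ∑' j : {j : GaussianInt // j ≠ 0},
        ENNReal.ofReal (Real.exp (-(2 * (π * Q ^ 2 / N) * gN j))) * ‖Ssum Q q₁ r₁ j‖ₑ ^ 2 ≤
      ENNReal.ofReal Q * residueTheta (π / Q) r₁ (q₁ ^ 2) 0 *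
          ∑' j : {j : GaussianInt // j ≠ 0},
            ENNReal.ofReal (Real.exp (-(2 * (π * Q ^ 2 / N) * gN j))) +
        ENNReal.ofReal Q * ∑' j : {j : GaussianInt // j ≠ 0}, ∑' h : {h : GaussianInt // h ≠ 0},
          ENNReal.ofReal (Real.exp (-(2 * √(Q / N) * ‖((2 * j * h : GaussianInt) : ℂ)‖))) *
            residueTheta (π / Q) r₁ (q₁ ^ 2) (2 * j * h) := by
  rw [← ENNReal.tsum_mul_left, ← ENNReal.tsum_mul_left, ← ENNReal.tsum_add]
  gcongr with j
  exact exp_neg_mul_enorm_Ssum_sq_le hN hQ hq₁ hle r₁ j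

lemma one_div_mul_gN_sq_le {t : ℝ} (hQ : 0 < Q) (ht : 0 < t) (hq₁ : Q / √2 < gN q₁) :
    1 / (t * gN (q₁ ^ 2)) ≤ 2 / (t * Q ^ 2) := by
  have hsq : Q ^ 2 / 2 ≤ gN (q₁ ^ 2) := by
    calc Q ^ 2 / 2 = (Q / √2) ^ 2 := by rw [div_pow, Real.sq_sqrt zero_le_two]
      _ ≤ gN q₁ ^ 2 := by gcongr
      _ = gN (q₁ ^ 2) := by rw [sq, sq, gN_mul]
  calc 1 / (t * gN (q₁ ^ 2)) ≤ 1 / (t * (Q ^ 2 / 2)) := by gcongr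
    _ = 2 / (t * Q ^ 2) := by field_simp

lemma residueTheta_pi_div_zero_le (hQ : 1 ≤ Q) (hq₁ : Q / √2 < gN q₁) (r₁ : GaussianInt) :
    residueTheta (π / Q) r₁ (q₁ ^ 2) 0 ≤ ENNReal.ofReal 96 := by
  have hQ₀ : 0 < Q := one_pos.trans_le hQ
  have hne := ne_zero_of_div_sqrt_two_lt_gN hQ₀.le hq₁
  refine (residueTheta_zero_le (by positivity) r₁ (pow_ne_zero 2 hne)).trans
    (ENNReal.ofReal_le_ofReal ?_)
  have hscale : 2 / (π / Q * Q ^ 2) ≤ 1 := by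
    rw [div_le_one (by positivity)]
    calc (2 : ℝ) ≤ 3 * 1 := by norm_num
      _ ≤ π * Q := by
          gcongr
          exact Real.pi_gt_three.le
      _ = π / Q * Q ^ 2 := by field_simp
  linarith [one_div_mul_gN_sq_le hQ₀ (div_pos Real.pi_pos hQ₀) hq₁]

lemma one_div_pi_mul_sq_div_le (hN : 0 ≤ N) : 1 / (π * Q ^ 2 / N) ≤ N / Q ^ 2 := by
  rw [one_div_div, mul_comm, ← div_div]
  exact div_le_self (by positivity) (by linarith [Real.pi_gt_three])

lemma div_pi_mul_sq_div_le (hε : 0 ≤ ε) (hN : 0 ≤ N) (hQ : 1 ≤ Q) :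
    ε / (π * Q ^ 2 / N) ≤ ε * (Q * N) := by
  calc ε / (π * Q ^ 2 / N) ≤ ε * (N / Q ^ 2) := by
        rw [div_eq_mul_one_div]
        gcongr ε * ?_
        exact one_div_pi_mul_sq_div_le hN
    _ ≤ ε * N := by
        gcongr
        exact div_le_self hN (one_le_pow₀ hQ)
    _ ≤ ε * (Q * N) := by
        gcongr
        exact le_mul_of_one_le_left hN hQ

lemma mul_one_add_one_div_pi_mul_sq_div_le (hN : 0 ≤ N) (hQ : 1 ≤ Q) :
    Q * (1 + 1 / (π * Q ^ 2 / N)) ≤ Q ^ 2 + N / Q := by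
  have hQ₀ : 0 < Q := one_pos.trans_le hQ
  calc Q * (1 + 1 / (π * Q ^ 2 / N)) ≤ Q * (1 + N / Q ^ 2) := by
        gcongr Q * (1 + ?_)
        exact one_div_pi_mul_sq_div_le hN
    _ = Q + N / Q := by field_simp
    _ ≤ Q ^ 2 + N / Q := by
        gcongr
        exact le_self_pow₀ hQ two_ne_zero

lemma diagonal_le (hε : 0 < ε) (hN : 0 < N) (hQ : 1 ≤ Q) (hq₁ : Q / √2 < gN q₁)
    (r₁ : GaussianInt) :
    ENNReal.ofReal Q * residueTheta (π / Q) r₁ (q₁ ^ 2) 0 *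
        ∑' j : {j : GaussianInt // j ≠ 0},
          ENNReal.ofReal (Real.exp (-(2 * (π * Q ^ 2 / N) * gN j))) ≤
      ENNReal.ofReal (4608 * ε ^ ε * ((Q * N) ^ ε * (Q ^ 2 + N / Q))) := by
  have hQ₀ : 0 < Q := one_pos.trans_le hQ
  have hbase := div_pi_mul_sq_div_le hε.le hN.le hQ
  have hsum := mul_one_add_one_div_pi_mul_sq_div_le hN.le hQ
  calc _ ≤ ENNReal.ofReal Q * ENNReal.ofReal 96 *
        ENNReal.ofReal ((ε / (π * Q ^ 2 / N)) ^ ε * (48 * (1 + 1 / (π * Q ^ 2 / N)))) := by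
        gcongr
        · exact residueTheta_pi_div_zero_le hQ hq₁ r₁
        · exact tsum_ne_zero_exp_neg_two_mul_gN_le hε (by positivity)
    _ = ENNReal.ofReal (4608 * (ε / (π * Q ^ 2 / N)) ^ ε * (Q * (1 + 1 / (π * Q ^ 2 / N)))) := by
        rw [← ENNReal.ofReal_mul hQ₀.le, ← ENNReal.ofReal_mul (by positivity)]
        ring_nf
    _ ≤ ENNReal.ofReal (4608 * (ε * (Q * N)) ^ ε * (Q ^ 2 + N / Q)) := by gcongr
    _ = ENNReal.ofReal (4608 * ε ^ ε * ((Q * N) ^ ε * (Q ^ 2 + N / Q))) := by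
        rw [Real.mul_rpow hε.le (by positivity)]
        ring_nf

lemma two_mul_div_sqrt_div_rpow_le (hε : 0 ≤ ε) (hN : 0 ≤ N) (hQ : 1 ≤ Q) :
    (2 * ε / √(Q / N)) ^ (2 * ε) ≤ ((2 * ε) ^ 2) ^ ε * (Q * N) ^ ε := by
  have hQ₀ : 0 < Q := one_pos.trans_le hQ
  have hN' : N / Q ≤ Q * N := (div_le_self hN hQ).trans (le_mul_of_one_le_left hN hQ)
  calc (2 * ε / √(Q / N)) ^ (2 * ε) = ((2 * ε) ^ 2 * (N / Q)) ^ ε := by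
        rw [← Nat.cast_ofNat (n := 2) (R := ℝ), Real.rpow_natCast_mul (by positivity), div_pow,
          Real.sq_sqrt (by positivity), div_div_eq_mul_div, mul_div_assoc]
    _ ≤ ((2 * ε) ^ 2 * (Q * N)) ^ ε := by gcongr
    _ = ((2 * ε) ^ 2) ^ ε * (Q * N) ^ ε := Real.mul_rpow (by positivity) (by positivity)

lemma mul_one_add_mul_one_add_one_div_le (hN : 0 < N) (hQ : 1 ≤ Q) (hq₁ : Q / √2 < gN q₁) :
    Q * ((1 + 1 / (π / Q)) * (1 + 1 / (√(Q / N) ^ 2 * gN (q₁ ^ 2)))) ≤ 4 * (Q ^ 2 + N / Q) := by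
  have hQ₀ : 0 < Q := one_pos.trans_le hQ
  have hdual : 1 + 1 / (π / Q) ≤ 2 * Q := by
    rw [one_div_div]
    linarith [div_le_self hQ₀.le (show 1 ≤ π by linarith [Real.pi_gt_three])]
  have hlattice := one_div_mul_gN_sq_le hQ₀ (t := √(Q / N) ^ 2) (by positivity) hq₁
  have hgN := gN_nonneg (q₁ ^ 2)
  calc _ ≤ Q * (2 * Q * (1 + 2 / (√(Q / N) ^ 2 * Q ^ 2))) := by gcongr
    _ = 2 * Q ^ 2 + 4 * (N / Q) := by
        rw [Real.sq_sqrt (by positivity)]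
        field_simp
        ring
    _ ≤ 4 * (Q ^ 2 + N / Q) := by nlinarith [sq_nonneg Q]

lemma offDiagonal_le {D : ℝ} {r₁ : GaussianInt} (hε : 0 < ε) (hD : 0 ≤ D)
    (hcard : ∀ m : GaussianInt, m ≠ 0 →
      (ENat.card {h // h ∣ m} : ℝ≥0∞) ≤ ENNReal.ofReal (D * gN m ^ ε))
    (hN : 0 < N) (hQ : 1 ≤ Q) (hq₁ : Q / √2 < gN q₁) (hrq : IsCoprime r₁ q₁) :
    ENNReal.ofReal Q * ∑' j : {j : GaussianInt // j ≠ 0}, ∑' h : {h : GaussianInt // h ≠ 0},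
        ENNReal.ofReal (Real.exp (-(2 * √(Q / N) * ‖((2 * j * h : GaussianInt) : ℂ)‖))) *
          residueTheta (π / Q) r₁ (q₁ ^ 2) (2 * j * h) ≤
      ENNReal.ofReal (4608 * D * ((2 * ε) ^ 2) ^ ε * ((Q * N) ^ ε * (Q ^ 2 + N / Q))) := by
  have hQ₀ : 0 < Q := one_pos.trans_le hQ
  have hne := ne_zero_of_div_sqrt_two_lt_gN hQ₀.le hq₁
  have hgN := gN_nonneg (q₁ ^ 2)
  have hpow := two_mul_div_sqrt_div_rpow_le hε.le hN.le hQ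
  have hsum := mul_one_add_mul_one_add_one_div_le hN hQ hq₁
  calc _ ≤ ENNReal.ofReal Q * (ENNReal.ofReal (D * (2 * ε / √(Q / N)) ^ (2 * ε)) *
        (ENNReal.ofReal (48 * (1 + 1 / (π / Q))) *
          ENNReal.ofReal (24 * (1 + 1 / (√(Q / N) ^ 2 * gN (q₁ ^ 2)))))) := by
        gcongr
        exact tsum_tsum_ne_zero_exp_mul_residueTheta_le hε hD hcard (by positivity) (by positivity)
          two_ne_zero (pow_ne_zero 2 hne) hrq.pow_right
    _ = ENNReal.ofReal (1152 * D * (2 * ε / √(Q / N)) ^ (2 * ε) *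
          (Q * ((1 + 1 / (π / Q)) * (1 + 1 / (√(Q / N) ^ 2 * gN (q₁ ^ 2)))))) := by
        rw [← ENNReal.ofReal_mul (by positivity), ← ENNReal.ofReal_mul (by positivity),
          ← ENNReal.ofReal_mul hQ₀.le]
        ring_nf
    _ ≤ ENNReal.ofReal (1152 * D * (((2 * ε) ^ 2) ^ ε * (Q * N) ^ ε) *
          (4 * (Q ^ 2 + N / Q))) := by gcongr
    _ = ENNReal.ofReal (4608 * D * ((2 * ε) ^ 2) ^ ε * ((Q * N) ^ ε * (Q ^ 2 + N / Q))) := by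
        ring_nf

end MainEstimate

theorem averaged_bound_square_sum_general {ε : ℝ} (hε : 0 < ε) :
    ∃ C : ℝ, 0 < C ∧ ∀ N Q : ℝ, 0 < N → ∀ q₁ : GaussianInt, Q / √2 < gN q₁ → gN q₁ ≤ Q →
      ∀ r₁ : GaussianInt, IsCoprime r₁ q₁ →
        (Summable fun j : {j : GaussianInt // j ≠ 0} =>
          Real.exp (-(2 * π) * gN j * Q ^ 2 / N) * ‖Ssum Q q₁ r₁ j‖ ^ 2) ∧
        ∑' j : {j : GaussianInt // j ≠ 0},
            Real.exp (-(2 * π) * gN j * Q ^ 2 / N) * ‖Ssum Q q₁ r₁ j‖ ^ 2 ≤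
          C * (Q * N) ^ ε * (Q ^ 2 + N / Q) := by
  obtain ⟨D, hD, hcard⟩ := exists_card_dvd_le_mul_gN_rpow hε
  refine ⟨4608 * ε ^ ε + 4608 * D * ((2 * ε) ^ 2) ^ ε, by positivity, ?_⟩
  intro N Q hN q₁ hlt hle r₁ hrq
  have hQ₀ : 0 < Q := by
    by_contra! hQ
    obtain rfl : Q = 0 := hQ.antisymm ((gN_nonneg q₁).trans hle)
    rw [zero_div] at hlt
    exact hlt.not_ge hle
  have hne := ne_zero_of_div_sqrt_two_lt_gN hQ₀.le hlt
  have hQ : 1 ≤ Q := (one_le_gN hne).trans hle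
  refine summable_and_tsum_le_of_tsum_ofReal_le (fun j => by positivity) (by positivity) ?_
  have hterm (j : {j : GaussianInt // j ≠ 0}) :
      ENNReal.ofReal (Real.exp (-(2 * π) * gN j * Q ^ 2 / N) * ‖Ssum Q q₁ r₁ j‖ ^ 2) =
        ENNReal.ofReal (Real.exp (-(2 * (π * Q ^ 2 / N) * gN j))) * ‖Ssum Q q₁ r₁ j‖ₑ ^ 2 := by
    rw [ENNReal.ofReal_mul (Real.exp_nonneg _), ENNReal.ofReal_pow (norm_nonneg _), ofReal_norm]
    ring_nf
  simp_rw [hterm]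
  refine (tsum_exp_neg_mul_enorm_Ssum_sq_le hN hQ₀ hne hle r₁).trans ?_
  rw [mul_assoc (4608 * ε ^ ε + _), add_mul, ENNReal.ofReal_add (by positivity) (by positivity)]
  exact add_le_add (diagonal_le hε hN hQ hlt r₁)
    (offDiagonal_le hε hD.le hcard hN hQ hlt hrq)

/-- **The averaged bound for the quadratic sums** (inequality (31) of the paper).
For `ε > 0` there is `C(ε)` such that for `N, Q₀ ≥ 2` with `Q₀ > N^{1/4}`,
`Q₀/√2 < N(q₁) ≤ Q₀` and `r₁` coprime to `q₁`,
`∑_{j ≠ 0} exp(-2π N(j) Q₀²/N) |S(q₁,r₁,j)|² ≤ C(ε) (Q₀N)^ε (Q₀² + N/Q₀)`. -/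
theorem averaged_bound_square_sum :
    ∀ ε : ℝ, 0 < ε → ∃ C : ℝ, 0 < C ∧
      ∀ (N Q0 : ℝ), 2 ≤ N → 2 ≤ Q0 → N ^ ((1 : ℝ) / 4) < Q0 →
      ∀ q1 : GaussianInt, Q0 / Real.sqrt 2 < gN q1 → gN q1 ≤ Q0 →
      ∀ r1 : GaussianInt, IsCoprime r1 q1 →
      (∑' j : {j : GaussianInt // j ≠ 0},
          Real.exp (-(2 * Real.pi) * gN (j : GaussianInt) * Q0 ^ 2 / N)
            * ‖Ssum Q0 q1 r1 (j : GaussianInt)‖ ^ 2)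
        ≤ C * (Q0 * N) ^ ε * (Q0 ^ 2 + N / Q0) := by
  intro ε hε
  obtain ⟨C, hC, hbound⟩ := averaged_bound_square_sum_general hε
  exact ⟨C, hC, fun N Q0 hN _ _ q1 hlt hle r1 hr =>
    (hbound N Q0 (two_pos.trans_le hN) q1 hlt hle r1 hr).2⟩
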